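/- Fix integers k ≥ s ≥ 1, R ∈ ℕ, and a set S ⊆ {1,…,k} with |S| = s. There exists a function 𝒜 assigning to every tuple (y_1,…,y_R) ∈ Y^R and every k-tuple p⃗ = (p_1,…,p_k) of probability distributions on Y a probability distribution 𝒜(y_1,…,y_R, p⃗) on {1,…,R+1}, such that for every p⃗ the following two-stage process has output distribution exactly equal to the consensus-sampling output distribution q_R: draw y_1,…,y_R independently, each with distribution avg_S := (1/s)·Σ_{i∈S} p_i; draw t with distribution 𝒜(y_1,…,y_R, p⃗); output y_t if t ≤ R and output ⊥ if t = R+1. Here q_R is the distribution on Y ∪ {⊥} with q_R(⊥) = (1 − Z)^R and q_R(y) = (1 − (1 − Z)^R)·g(y)/Z for y ∈ Y when Z > 0, and the point mass at ⊥ when Z = 0. -/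

import Mathlib

/-!
The selector is sequential rejection sampling. With `P = avg_S` and acceptance probability
`a(y) = g(y) / P(y)` (a number in `[0, 1]` because `S` competes in the minimum defining `g`),
accept the first sample that passes an independent `a`-coin, and abstain if none does.
That the weights of the `R + 1` outcomes sum to one is a telescoping identity
(`isDist_firstAccept`).

Since `P · a = g`, the joint weight of samples `ys` and outcome `t` is a product over the
coordinates of `ys`: a rejected coordinate contributes `P - g`, the accepted one `g`, an unread one
`P`. Sums over `Fin R → Y` of such products factor (`hasSum_prod_pi`), so abstention has probability
`(1 - Z) ^ R` and output `y` has probability `∑ t < R, (1 - Z) ^ t * g y`, a geometric sum.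
-/

open scoped BigOperators

/-- `p` is a probability distribution: nonnegative and summing to 1. -/
def IsDist {α : Type*} (p : α → ℝ) : Prop := (∀ a, 0 ≤ p a) ∧ HasSum p 1

/-- `g(y) := min over T ⊆ {1,…,k} with |T| = s of avg_T(y)`, the average of the `s`
smallest of the `k` values `p_1(y), …, p_k(y)`. -/
noncomputable def gmin {Y : Type*} {k : ℕ} (s : ℕ) (p : Fin k → Y → ℝ) (y : Y) : ℝ :=
  sInf {v : ℝ | ∃ T : Finset (Fin k), T.card = s ∧ v = (∑ i ∈ T, p i y) / s}

/-- The consensus-sampling output distribution on `Y ∪ {⊥}` (with `⊥ = none`):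
`q_R(⊥) = (1 − Z)^R` and `q_R(y) = (1 − (1 − Z)^R)·g(y)/Z` when `Z > 0`, and the
point mass at `⊥` when `Z = 0`. -/
noncomputable def consensusOut {Y : Type*} (g : Y → ℝ) (Z : ℝ) (R : ℕ) : Option Y → ℝ
  | none => (1 - Z) ^ R
  | some y => if 0 < Z then (1 - (1 - Z) ^ R) * g y / Z else 0

/-- A product of nonnegative summable families, one per coordinate, sums over all tuples to the
product of the sums. -/
lemma hasSum_prod_pi {Y : Type*} : ∀ (n : ℕ) (f : Fin n → Y → ℝ) (a : Fin n → ℝ),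
    (∀ i y, 0 ≤ f i y) → (∀ i, HasSum (f i) (a i)) →
    HasSum (fun ys : Fin n → Y => ∏ i, f i (ys i)) (∏ i, a i)
  | 0, f, a, _, _ => by
      simp
  | n + 1, f, a, h0, hf => by
      have ih := hasSum_prod_pi n (fun i => f i.succ) (fun i => a i.succ)
        (fun i => h0 _) (fun i => hf _)
      have hs := (hf 0).summable.mul_of_nonneg ih.summable (h0 0)
        (fun ys => Finset.prod_nonneg fun i _ => h0 _ _)
      have hm := (hf 0).mul ih hs
      rw [← (Fin.consEquiv fun _ : Fin (n + 1) => Y).hasSum_iff, Fin.prod_univ_succ]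
      refine hm.congr_fun ?_
      intro x
      simp [Fin.consEquiv, Fin.prod_univ_succ]

/-- The law of the first accepted index when index `j` is accepted with probability `c j`,
independently; the last index of `Fin (R + 1)` means that nothing was accepted. -/
noncomputable def firstAccept {R : ℕ} (c : Fin R → ℝ) (t : Fin (R + 1)) : ℝ :=
  (if h : (t : ℕ) < R then c ⟨t, h⟩ else 1) * ∏ j ∈ Finset.univ.filter (fun j : Fin R => (j : ℕ) < t), (1 - c j)

lemma firstAccept_castSucc {R : ℕ} (c : Fin R → ℝ) (t : Fin R) :
    firstAccept c t.castSucc = c t * ∏ j ∈ Finset.univ.filter (fun j : Fin R => j < t), (1 - c j) := by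
  simp [firstAccept]

lemma firstAccept_last {R : ℕ} (c : Fin R → ℝ) :
    firstAccept c (Fin.last R) = ∏ j : Fin R, (1 - c j) := by
  simp [firstAccept]

lemma isDist_firstAccept {R : ℕ} (c : Fin R → ℝ) (h0 : ∀ j, 0 ≤ c j) (h1 : ∀ j, c j ≤ 1) :
    IsDist (firstAccept c) := by
  refine ⟨fun t => ?_, ?_⟩
  · refine mul_nonneg ?_ (Finset.prod_nonneg fun j _ => sub_nonneg.2 (h1 j))
    split_ifs
    · exact h0 _
    · exact zero_le_one
  · have h := hasSum_fintype (firstAccept c)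
    rw [Fin.sum_univ_castSucc, firstAccept_last, Finset.prod_one_sub_ordered] at h
    simpa [firstAccept_castSucc] using h

section gmin

variable {Y : Type*} {k s : ℕ} {p : Fin k → Y → ℝ}

lemma gmin_nonneg (hp : ∀ i, IsDist (p i)) (y : Y) : 0 ≤ gmin s p y := by
  refine Real.sInf_nonneg ?_
  rintro v ⟨T, -, rfl⟩
  exact div_nonneg (Finset.sum_nonneg fun i _ => (hp i).1 y) (Nat.cast_nonneg s)

lemma gmin_le (hp : ∀ i, IsDist (p i)) {S : Finset (Fin k)} (hS : S.card = s) (y : Y) :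
    gmin s p y ≤ (∑ i ∈ S, p i y) / s := by
  refine csInf_le ⟨0, ?_⟩ ⟨S, hS, rfl⟩
  rintro v ⟨T, -, rfl⟩
  exact div_nonneg (Finset.sum_nonneg fun i _ => (hp i).1 y) (Nat.cast_nonneg s)

lemma hasSum_avg (hs : 1 ≤ s) (hp : ∀ i, IsDist (p i)) {S : Finset (Fin k)} (hS : S.card = s) :
    HasSum (fun y => (∑ i ∈ S, p i y) / s) 1 := by
  have h := (hasSum_sum fun i (_ : i ∈ S) => (hp i).2).div_const (s : ℝ)
  have hs0 : (s : ℝ) ≠ 0 := by positivity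
  simpa [hS, hs0] using h

end gmin

section sampling

variable {Y : Type*} {P g : Y → ℝ} {Z : ℝ}

/-- Where `P` vanishes so does `g`, so the value of `g / P` there does not matter. -/
lemma mul_accept (h0 : ∀ y, 0 ≤ g y) (hgP : ∀ y, g y ≤ P y) (y : Y) : P y * (g y / P y) = g y := by
  by_cases h : P y = 0
  · have := h0 y
    have := hgP y
    rw [h]
    linarith
  · field_simp

/-- The probability that no sample is accepted. -/
lemma hasSum_abstain (R : ℕ) (h0 : ∀ y, 0 ≤ g y) (hgP : ∀ y, g y ≤ P y)
    (hP : HasSum P 1) (hg : HasSum g Z) :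
    HasSum (fun ys : Fin R → Y =>
      (∏ r, P (ys r)) * firstAccept (fun j => g (ys j) / P (ys j)) (Fin.last R))
      ((1 - Z) ^ R) := by
  have h := hasSum_prod_pi R (fun _ y => P y - g y) (fun _ => 1 - Z)
    (fun _ y => sub_nonneg.2 (hgP y)) (fun _ => hP.sub hg)
  simp only [Finset.prod_const, Finset.card_univ, Fintype.card_fin] at h
  refine h.congr_fun fun ys => ?_
  rw [firstAccept_last, ← Finset.prod_mul_distrib]
  refine Finset.prod_congr rfl fun j _ => ?_
  rw [mul_sub, mul_accept h0 hgP, mul_one]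

open Classical in
/-- The probability that sample `t` is the first accepted one and equals `y`. -/
lemma hasSum_accept {R : ℕ} (t : Fin R) (y : Y) (h0 : ∀ y, 0 ≤ g y) (hgP : ∀ y, g y ≤ P y)
    (hP : HasSum P 1) (hg : HasSum g Z) :
    HasSum (fun ys : Fin R → Y =>
      (∏ r, P (ys r)) * (firstAccept (fun j => g (ys j) / P (ys j)) t.castSucc *
        (if ys t = y then 1 else 0)))
      ((1 - Z) ^ (t : ℕ) * g y) := by
  have h := hasSum_prod_pi R
    (fun j x => (if j < t then P x - g x else P x) *
      (if j = t then g x / P x * (if x = y then 1 else 0) else 1))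
    (fun j => (if j < t then 1 - Z else 1) * (if j = t then g y else 1)) ?_ ?_
  · convert h using 1
    · funext ys
      rw [firstAccept_castSucc, Finset.prod_mul_distrib, Finset.prod_ite_eq']
      have hsplit : ∏ j, (if j < t then P (ys j) - g (ys j) else P (ys j)) = (∏ j, P (ys j)) *
          ∏ j ∈ Finset.univ.filter (fun j : Fin R => j < t), (1 - g (ys j) / P (ys j)) := by
        rw [Finset.prod_filter, ← Finset.prod_mul_distrib]
        refine Finset.prod_congr rfl fun j _ => ?_
        split_ifs
        · rw [mul_sub, mul_accept h0 hgP, mul_one]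
        · rw [mul_one]
      rw [hsplit, if_pos (Finset.mem_univ t)]
      ring
    · rw [Finset.prod_mul_distrib, Finset.prod_ite_eq', ← Finset.prod_filter,
        show Finset.univ.filter (fun j : Fin R => j < t) = Finset.Iio t by ext; simp]
      simp
  · intro j x
    have := h0 x
    have := hgP x
    have : 0 ≤ P x := (h0 x).trans (hgP x)
    refine mul_nonneg ?_ ?_
    · split_ifs <;> linarith
    · split_ifs <;> positivity
  · intro j
    rcases lt_trichotomy j t with hj | rfl | hj
    · simpa [hj, hj.ne] using hP.sub hg
    · have := hasSum_ite_eq y (g y)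
      simp only [lt_irrefl, if_true, if_false, one_mul]
      refine this.congr_fun fun x => ?_
      rw [← mul_assoc, mul_accept h0 hgP]
      split_ifs with hx
      · rw [hx, mul_one]
      · rw [mul_zero]
    · simpa [hj.not_gt, hj.ne'] using hP

end sampling

open Classical in
/-- **Leakage simulation.** There is a randomized selector `A`, mapping `R` samples and the
tuple of distributions to a probability distribution on `{1,…,R+1}`, such that drawing
`y_1,…,y_R` i.i.d. from `avg_S = (1/s)·Σ_{i∈S} p_i`, then drawing `t ∼ A(y_1,…,y_R,p⃗)` and
outputting `y_t` if `t ≤ R` and `⊥` if `t = R+1`, yields exactly the consensus-sampling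
output distribution `q_R`. Indices `t ∈ Fin (R+1)` with `(t : ℕ) < R` stand for `1,…,R`,
and the last index stands for `R+1`. -/
theorem leakage_simulation
    {Y : Type*} [Countable Y] [Nonempty Y]
    (k s : ℕ) (hs1 : 1 ≤ s) (hsk : s ≤ k) (R : ℕ)
    (S : Finset (Fin k)) (hScard : S.card = s) :
    ∃ A : (Fin R → Y) → (Fin k → Y → ℝ) → Fin (R + 1) → ℝ,
      ∀ p : Fin k → Y → ℝ, (∀ i, IsDist (p i)) →
        (∀ ys : Fin R → Y, IsDist (A ys p)) ∧
        (∀ z : Option Y,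
          (∑' ys : Fin R → Y,
            (∏ r : Fin R, (∑ i ∈ S, p i (ys r)) / s) *
              ∑ t : Fin (R + 1), A ys p t *
                (if (if h : (t : ℕ) < R then some (ys ⟨t, h⟩) else none) = z then 1 else 0))
            = consensusOut (gmin s p) (∑' y, gmin s p y) R z) := by
  refine ⟨fun ys p => firstAccept fun j => gmin s p (ys j) / ((∑ i ∈ S, p i (ys j)) / s),
    fun p hp => ?_⟩
  have h0 := gmin_nonneg (s := s) hp
  have hgP := gmin_le hp hScard
  have hP := hasSum_avg hs1 hp hScard
  have hsum : Summable (gmin s p) := Summable.of_nonneg_of_le h0 hgP hP.summable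
  have hg := hsum.hasSum
  refine ⟨fun ys => isDist_firstAccept _ (fun j => div_nonneg (h0 _) ((h0 _).trans (hgP _)))
    (fun j => div_le_one_of_le₀ (hgP _) ((h0 _).trans (hgP _))), ?_⟩
  rintro (_ | y)
  · have h := hasSum_abstain R h0 hgP hP hg
    simpa [Fin.sum_univ_castSucc, consensusOut, (Fin.is_lt _).not_ge] using h.tsum_eq
  · have h := hasSum_sum fun (t : Fin R) (_ : t ∈ Finset.univ) =>
      hasSum_accept t y h0 hgP hP hg
    simp only [← Finset.mul_sum, ← Finset.sum_mul] at h
    have hR : (∑ t : Fin R, (1 - ∑' y, gmin s p y) ^ (t : ℕ)) * gmin s p y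
        = consensusOut (gmin s p) (∑' y, gmin s p y) R (some y) := by
      rw [Fin.sum_univ_eq_sum_range fun t => (1 - ∑' y, gmin s p y) ^ t]
      simp only [consensusOut]
      split_ifs with hZ
      · have hgeom := mul_neg_geom_sum (1 - ∑' y, gmin s p y) R
        rw [sub_sub_cancel] at hgeom
        rw [← hgeom]
        field_simp
      -- `Z = 0` forces `g` to vanish identically.
      · have : gmin s p y = 0 :=
          le_antisymm ((hsum.le_tsum y fun j _ => h0 j).trans (not_lt.1 hZ)) (h0 y)
        rw [this, mul_zero]
    rw [hR] at h
    simpa [Fin.sum_univ_castSucc] using h.tsum_eq
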